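/- arXiv:1405.0781 — 4 statements merged into one kernel-verified Lean document; each statement's English description precedes it below -/
import Mathlib

section
/- For any finite words σ and τ over {1,…,m} with |p_σ − p_τ| ≤ T−1, the translation part of S_τ⁻¹∘S_σ, namely c = λ^{−p_τ}(b_σ − b_τ) (so that S_τ⁻¹∘S_σ(x) = λ^{p_σ−p_τ}x + c), satisfies c = λ^{T−2}·R(λ⁻¹) for some polynomial R all of whose coefficients lie in B−B. -/
open Polynomial Filter

noncomputable section

namespace PVOSC

variable {m : ℕ}

/-- `λ⁻¹` is a Pisot (P.V.) number: an algebraic integer `> 1` all of whose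
Galois conjugates other than itself have complex absolute value `< 1`. -/
def IsPisot (θ : ℝ) : Prop :=
  1 < θ ∧ IsIntegral ℤ θ ∧
    ∀ z : ℂ, aeval z (minpoly ℤ θ) = 0 → z ≠ (θ : ℂ) → ‖z‖ < 1

/-- `p_σ` for a finite word `σ`. -/
def wordP (p : Fin m → ℕ) (σ : List (Fin m)) : ℕ := (σ.map p).sum

/-- The contracting similitude `S_i(x) = λ^{p_i} x + b_i`. -/
def Smap (lam : ℝ) (p : Fin m → ℕ) (b : Fin m → ℝ) (i : Fin m) : ℝ → ℝ :=
  fun x => lam ^ p i * x + b i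

/-- `S_σ = S_{i₁} ∘ ⋯ ∘ S_{i_k}` for `σ = i₁ ⋯ i_k`. -/
def SW (lam : ℝ) (p : Fin m → ℕ) (b : Fin m → ℝ) (σ : List (Fin m)) : ℝ → ℝ :=
  σ.foldr (fun i f => Smap lam p b i ∘ f) id

/-- `b_σ`, the translation part of `S_σ`. -/
def wordB (lam : ℝ) (p : Fin m → ℕ) (b : Fin m → ℝ) (σ : List (Fin m)) : ℝ :=
  SW lam p b σ 0

/-- `B = {0, b₁, …, b_m}`. -/
def Bset (b : Fin m → ℝ) : Set ℝ := insert 0 (Set.range b)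

/-- `B − B`. -/
def BB (b : Fin m → ℝ) : Set ℝ := {x | ∃ u ∈ Bset b, ∃ v ∈ Bset b, x = u - v}

/-- `max_i |b_i|`. -/
def bmax (b : Fin m → ℝ) : ℝ := ⨆ i, |b i|

/-- The set `𝒞`. -/
def Cset (lam : ℝ) (b : Fin m → ℝ) (T : ℕ) : Set ℝ :=
  {x | |x| ≤ (1 + lam ^ (1 - (T : ℤ))) * bmax b / (1 - lam) ∧
    ∃ R : ℝ[X], (∀ n, R.coeff n ∈ BB b) ∧ lam ^ (2 - (T : ℤ)) * x = R.eval lam⁻¹}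

/-- The vertex set `Ξ = {n ∈ ℤ : |n| ≤ T−1} × 𝒞`. -/
def Xi (lam : ℝ) (b : Fin m → ℝ) (T : ℕ) : Set (ℤ × ℝ) :=
  {v | |v.1| ≤ (T : ℤ) - 1 ∧ v.2 ∈ Cset lam b T}

/-- The open set condition. -/
def OSC (lam : ℝ) (p : Fin m → ℕ) (b : Fin m → ℝ) : Prop :=
  ∃ U : Set ℝ, U.Nonempty ∧ IsOpen U ∧ (⋃ i, Smap lam p b i '' U) ⊆ U ∧
    ∀ i j : Fin m, i ≠ j → Smap lam p b i '' U ∩ Smap lam p b j '' U = ∅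

/-- The strong separation condition for the attractor `E`. -/
def SSC (lam : ℝ) (p : Fin m → ℕ) (b : Fin m → ℝ) (E : Set ℝ) : Prop :=
  ∀ i j : Fin m, i ≠ j → Smap lam p b i '' E ∩ Smap lam p b j '' E = ∅

/-- Group law on `ℤ × ℝ`: `(p₁,c₁)·(p₂,c₂) = (p₁+p₂, λ^{p₁} c₂ + c₁)`. -/
def gmul (lam : ℝ) (u v : ℤ × ℝ) : ℤ × ℝ := (u.1 + v.1, lam ^ u.1 * v.2 + u.2)

/-- Inverse for the group law: `(p,c)⁻¹ = (−p, −λ^{−p} c)`. -/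
def ginv (lam : ℝ) (u : ℤ × ℝ) : ℤ × ℝ := (-u.1, -(lam ^ (-u.1) * u.2))

/-- The group element `(p_σ, b_σ)` associated to a finite word `σ`. -/
def elem (lam : ℝ) (p : Fin m → ℕ) (b : Fin m → ℝ) (σ : List (Fin m)) : ℤ × ℝ :=
  ((wordP p σ : ℤ), wordB lam p b σ)

/-- The sequence `(q_k, c_k)` with the recursive structure w.r.t. `({α_k}, {β_k})`:
`recSeq … k = (q_{k+1}, c_{k+1})`, i.e. index `k` corresponds to `(q_{k+1}, c_{k+1})`. -/
def recSeq (lam : ℝ) (p : Fin m → ℕ) (b : Fin m → ℝ) (α β : ℕ → List (Fin m)) : ℕ → ℤ × ℝ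
  | 0 => gmul lam (ginv lam (elem lam p b (β 0))) (elem lam p b (α 0))
  | (k+1) => gmul lam (ginv lam (elem lam p b (β (k+1))))
      (gmul lam (recSeq lam p b α β k) (elem lam p b (α (k+1))))

/-- The edge relation of the directed graph `G` on `Ξ`. -/
def edge (lam : ℝ) (p : Fin m → ℕ) (b : Fin m → ℝ) (T : ℕ) (u v : ℤ × ℝ) : Prop :=
  u ∈ Xi lam b T ∧ v ∈ Xi lam b T ∧
    ∃ α β : List (Fin m), 1 ≤ wordP p α ∧ wordP p α ≤ 2 * T - 1 ∧
      1 ≤ wordP p β ∧ wordP p β ≤ 2 * T - 1 ∧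
      v.1 = (wordP p α : ℤ) + u.1 - (wordP p β : ℤ) ∧
      v.2 = lam ^ (-(wordP p β : ℤ)) * u.2 + lam ^ (u.1 - (wordP p β : ℤ)) * wordB lam p b α
        - lam ^ (-(wordP p β : ℤ)) * wordB lam p b β

/-- `Λ = Ξ ∩ {(p_j − p_i, λ^{−p_i}(b_j − b_i)) : i ≠ j}`. -/
def Lam (lam : ℝ) (p : Fin m → ℕ) (b : Fin m → ℝ) (T : ℕ) : Set (ℤ × ℝ) :=
  Xi lam b T ∩ {v | ∃ i j : Fin m, i ≠ j ∧
    v = ((p j : ℤ) - (p i : ℤ), lam ^ (-(p i : ℤ)) * (b j - b i))}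

/-- The length-`k` prefix of an infinite word `ω`. -/
def prefixList (ω : ℕ → Fin m) (k : ℕ) : List (Fin m) := (List.range k).map ω

theorem digits (lam : ℝ) {m : ℕ} (p : Fin m → ℕ) (hp : ∀ i, 1 ≤ p i) (b : Fin m → ℝ)
    (σ : List (Fin m)) :
    ∃ a : ℕ → ℝ, (∀ n, a n ∈ Bset b) ∧
      ∀ N, wordP p σ ≤ N → wordB lam p b σ = ∑ n ∈ Finset.range N, a n * lam ^ n := by
  induction σ with
  | nil => exact ⟨fun _ => 0, fun _ => Or.inl rfl, fun N _ => by simp [wordB, SW]⟩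
  | cons i σ ih =>
    obtain ⟨a, ha, hs⟩ := ih
    refine ⟨fun n => if n = 0 then b i else if n < p i then 0 else a (n - p i), ?_, ?_⟩
    · intro n
      dsimp only
      split_ifs
      · exact Or.inr ⟨i, rfl⟩
      · exact Or.inl rfl
      · exact ha _
    · intro N hN
      have hw : wordP p (i :: σ) = p i + wordP p σ := by simp [wordP]
      have hB : wordB lam p b (i :: σ) = lam ^ p i * wordB lam p b σ + b i := by
        simp [wordB, SW, Smap]
      rw [hw] at hN
      obtain ⟨M, rfl⟩ : ∃ M, N = p i + M := ⟨N - p i, by omega⟩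
      have h1 := hp i
      rw [hB, hs M (by omega), Finset.sum_range_add, add_comm]
      congr 1
      · rw [Finset.sum_eq_single 0]
        · simp
        · intro n hn h0
          have := Finset.mem_range.mp hn
          simp [h0, this]
        · intro h
          exact absurd (Finset.mem_range.mpr h1) h
      · rw [Finset.mul_sum]
        refine Finset.sum_congr rfl fun n _ => ?_
        have h2 : p i + n ≠ 0 := by omega
        have h3 : ¬ (p i + n < p i) := by omega
        dsimp only
        rw [if_neg h2, if_neg h3, Nat.add_sub_cancel_left, pow_add]
        ring

theorem stmt0 (lam : ℝ) (hlam0 : 0 < lam) (hlam1 : lam < 1)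
    (hPisot : IsPisot lam⁻¹)
    {m : ℕ} (hm : 2 ≤ m) (p : Fin m → ℕ) (hp : ∀ i, 1 ≤ p i)
    (b : Fin m → ℝ) (hbZ : ∀ i, ∃ z : ℤ, b i = (z : ℝ))
    (T : ℕ) (hT : T = Finset.univ.sup p)
    (σ τ : List (Fin m)) (hσ : σ ≠ []) (hτ : τ ≠ [])
    (hdiff : |(wordP p σ : ℤ) - (wordP p τ : ℤ)| ≤ (T : ℤ) - 1) :
    ∃ R : ℝ[X], (∀ n, R.coeff n ∈ BB b) ∧
      lam ^ (-(wordP p τ : ℤ)) * (wordB lam p b σ - wordB lam p b τ)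
        = lam ^ ((T : ℤ) - 2) * R.eval lam⁻¹ := by
  obtain ⟨a, ha, hsa⟩ := digits lam p hp b σ
  obtain ⟨c, hc, hsc⟩ := digits lam p hp b τ
  have hτ1 : 1 ≤ wordP p τ := by
    cases τ with
    | nil => exact absurd rfl hτ
    | cons i t =>
      have := hp i
      simp only [wordP, List.map_cons, List.sum_cons]
      omega
  have hT1 : (1 : ℤ) ≤ T := by
    have := abs_nonneg ((wordP p σ : ℤ) - (wordP p τ : ℤ))
    omega
  have hle := (abs_le.mp hdiff).2
  obtain ⟨K, hK⟩ : ∃ K : ℕ, wordP p τ + T = K + 2 := ⟨wordP p τ + T - 2, by omega⟩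
  refine ⟨∑ n ∈ Finset.range (K + 1), C (a (K - n) - c (K - n)) * X ^ n, ?_, ?_⟩
  · intro n
    simp only [finsetSum_coeff, coeff_C_mul_X_pow]
    rw [Finset.sum_ite_eq]
    split_ifs
    · exact ⟨_, ha _, _, hc _, rfl⟩
    · exact ⟨0, Or.inl rfl, 0, Or.inl rfl, by simp⟩
  · rw [hsa (K + 1) (by omega), hsc (K + 1) (by omega), ← Finset.sum_sub_distrib,
      ← Finset.sum_range_reflect, eval_finsetSum, Finset.mul_sum, Finset.mul_sum]
    refine Finset.sum_congr rfl fun n hn => ?_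
    have hn' := Finset.mem_range.mp hn
    have e : K + 1 - 1 - n = K - n := by omega
    have hl : lam ≠ 0 := hlam0.ne'
    have key : lam ^ (-(wordP p τ : ℤ)) * lam ^ (K - n) = lam ^ ((T : ℤ) - 2) * lam⁻¹ ^ n := by
      rw [← zpow_natCast lam (K - n), inv_pow, ← zpow_natCast lam n, ← zpow_neg,
        ← zpow_add₀ hl, ← zpow_add₀ hl]
      congr 1
      omega
    rw [e]
    simp only [eval_mul, eval_C, eval_pow, eval_X]
    linear_combination (a (K - n) - c (K - n)) * key

end PVOSC
end
end

section
/- The weak separation property holds for {S_i}: there exists ε > 0 such that for all finite words σ, τ over {1,…,m}, either S_σ = S_τ as maps, or max(|λ^{p_σ−p_τ} − 1|, |λ^{−p_τ}(b_σ − b_τ)|) ≥ ε (i.e., the identity map is not an accumulation point of the maps S_τ⁻¹∘S_σ(x) = λ^{p_σ−p_τ}x + λ^{−p_τ}(b_σ − b_τ) with S_σ ≠ S_τ). -/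
open Polynomial Filter

noncomputable section

namespace PVOSC

variable {m : ℕ}

theorem SW_eq (lam : ℝ) {m : ℕ} (p : Fin m → ℕ) (b : Fin m → ℝ) (σ : List (Fin m)) (x : ℝ) :
    SW lam p b σ x = lam ^ wordP p σ * x + wordB lam p b σ := by
  induction σ generalizing x with
  | nil => simp [SW, wordP, wordB]
  | cons i σ ih =>
    have h1 : ∀ y, SW lam p b (i :: σ) y = lam ^ p i * SW lam p b σ y + b i := fun y => rfl
    have h2 : wordB lam p b (i :: σ) = lam ^ p i * wordB lam p b σ + b i := rfl
    have h3 : wordP p (i :: σ) = p i + wordP p σ := by simp [wordP]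
    rw [h1, h2, h3, ih, pow_add]; ring

theorem word_poly (lam : ℝ) (hlam0 : 0 < lam) {m : ℕ} (p : Fin m → ℕ) (hp : ∀ i, 1 ≤ p i)
    (b : Fin m → ℝ) (z : Fin m → ℤ) (hz : ∀ i, b i = (z i : ℝ)) (B : ℤ) (hB0 : 0 ≤ B)
    (hB : ∀ i, |z i| ≤ B) (σ : List (Fin m)) :
    ∃ Q : ℤ[X], (∀ n, |Q.coeff n| ≤ B) ∧ (∀ n, wordP p σ < n → Q.coeff n = 0) ∧
      aeval lam⁻¹ Q = lam⁻¹ ^ wordP p σ * wordB lam p b σ := by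
  induction σ with
  | nil => exact ⟨0, by simpa using hB0, by simp, by simp [wordB, SW]⟩
  | cons i σ ih =>
    obtain ⟨Q, h1, h2, h3⟩ := ih
    have e2 : wordB lam p b (i :: σ) = lam ^ p i * wordB lam p b σ + b i := rfl
    have e3 : wordP p (i :: σ) = p i + wordP p σ := by simp [wordP]
    have hpi := hp i
    refine ⟨Q + C (z i) * X ^ wordP p (i :: σ), ?_, ?_, ?_⟩
    · intro n
      rw [coeff_add, coeff_C_mul, coeff_X_pow]
      split_ifs with h
      · rw [h2 n (by omega)]; simpa using hB i
      · simpa using h1 n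
    · intro n hn
      rw [coeff_add, coeff_C_mul, coeff_X_pow, if_neg (by omega), h2 n (by omega)]; simp
    · have : lam⁻¹ ^ p i * lam ^ p i = 1 := by
        rw [← mul_pow, inv_mul_cancel₀ hlam0.ne', one_pow]
      rw [map_add, h3, e2, e3]
      simp only [map_mul, map_pow, aeval_X, eq_intCast, map_intCast]
      rw [hz i, pow_add]
      linear_combination (-(lam⁻¹ ^ wordP p σ * wordB lam p b σ)) * this

theorem norm_aeval_le (R : ℤ[X]) (M : ℝ) (hM : ∀ n, |(R.coeff n : ℝ)| ≤ M) (w : ℂ)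
    (hw : ‖w‖ < 1) : ‖aeval w R‖ ≤ M / (1 - ‖w‖) := by
  have hM0 : 0 ≤ M := (abs_nonneg _).trans (hM 0)
  rw [aeval_eq_sum_range]
  refine (norm_sum_le _ _).trans ?_
  calc _ ≤ ∑ i ∈ Finset.range (R.natDegree + 1), M * ‖w‖ ^ i := by
        refine Finset.sum_le_sum fun i _ => ?_
        rw [zsmul_eq_mul, norm_mul, norm_pow]
        refine mul_le_mul_of_nonneg_right ?_ (by positivity)
        rw [Complex.norm_intCast]; exact hM i
    _ = M * ∑ i ∈ Finset.range (R.natDegree + 1), ‖w‖ ^ i := by rw [Finset.mul_sum]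
    _ ≤ M * (1 - ‖w‖)⁻¹ := by
        refine mul_le_mul_of_nonneg_left ?_ hM0
        rw [← tsum_geometric_of_lt_one (norm_nonneg _) hw]
        exact (summable_geometric_of_lt_one (norm_nonneg _) hw).sum_le_tsum _
          (fun _ _ => by positivity)
    _ = _ := by rw [div_eq_mul_inv]

open IntermediateField in
theorem garsia (θ : ℝ) (h : IsPisot θ) (M : ℝ) (hM : 0 < M) :
    ∃ ε : ℝ, 0 < ε ∧ ∀ R : ℤ[X], (∀ n, |(R.coeff n : ℝ)| ≤ M) → aeval θ R ≠ 0 →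
      ε ≤ |aeval θ R| := by
  classical
  obtain ⟨_, hint, hconj⟩ := h
  have hintQ : IsIntegral ℚ θ := hint.tower_top
  haveI : FiniteDimensional ℚ ℚ⟮θ⟯ := adjoin.finiteDimensional hintQ
  let g : ℚ⟮θ⟯ := AdjoinSimple.gen ℚ θ
  have hg : algebraMap ℚ⟮θ⟯ ℝ g = θ := AdjoinSimple.algebraMap_gen ℚ θ
  let ι : ℚ⟮θ⟯ →ₐ[ℚ] ℂ := (Complex.ofRealAm.restrictScalars ℚ).comp (ℚ⟮θ⟯).val
  have hι : ι g = (θ : ℂ) := rfl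
  have hinj : Function.Injective (algebraMap ℚ⟮θ⟯ ℝ) := (algebraMap ℚ⟮θ⟯ ℝ).injective
  have hgmin : aeval g (minpoly ℤ θ) = 0 := by
    apply hinj
    rw [← aeval_algebraMap_apply, hg, map_zero, minpoly.aeval]
  have hgint : IsIntegral ℤ g := ⟨minpoly ℤ θ, minpoly.monic hint, hgmin⟩
  have hφ : ∀ (φ : ℚ⟮θ⟯ →ₐ[ℚ] ℂ) (R : ℤ[X]), φ (aeval g R) = aeval (φ g) R := fun φ R =>
    (aeval_algHom_apply (φ.restrictScalars ℤ) g R).symm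
  have hlt : ∀ φ : ℚ⟮θ⟯ →ₐ[ℚ] ℂ, φ ≠ ι → ‖φ g‖ < 1 := by
    intro φ hne
    refine hconj _ ?_ ?_
    · rw [← hφ, hgmin, map_zero]
    · intro he
      exact hne (adjoin_algHom_ext ℚ (by
        intro x hx
        obtain rfl : x = θ := hx
        exact he))
  set P : ℝ := ∏ φ ∈ Finset.univ.erase ι, M / (1 - ‖φ g‖) with hP
  have hPpos : 0 < P := Finset.prod_pos fun φ hm => by
    have := hlt φ (Finset.ne_of_mem_erase hm)
    exact div_pos hM (by linarith)
  refine ⟨P⁻¹, by positivity, fun R hR hne => ?_⟩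
  have hy0 : aeval g R ≠ 0 := by
    intro h0
    apply hne
    rw [← hg, aeval_algebraMap_apply, h0, map_zero]
  have hyint : IsIntegral ℤ (aeval g R) := by
    rw [aeval_eq_sum_range]
    exact IsIntegral.sum _ fun i _ => (hgint.pow i).smul _
  obtain ⟨n, hn⟩ := IsIntegrallyClosed.isIntegral_iff.mp (Algebra.isIntegral_norm ℚ hyint)
  have hN0 : Algebra.norm ℚ (aeval g R) ≠ 0 := Algebra.norm_ne_zero_iff.mpr hy0
  have hn0 : n ≠ 0 := by
    rintro rfl
    exact hN0 (by rw [← hn]; simp)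
  have hprod := Algebra.norm_eq_prod_embeddings ℚ ℂ (aeval g R)
  rw [← hn] at hprod
  have h1 : (1 : ℝ) ≤ ∏ φ : ℚ⟮θ⟯ →ₐ[ℚ] ℂ, ‖φ (aeval g R)‖ := by
    rw [← norm_prod, ← hprod]
    simp only [eq_intCast, map_intCast, algebraMap_int_eq, Complex.norm_intCast]
    exact_mod_cast Int.one_le_abs hn0
  rw [← Finset.mul_prod_erase _ _ (Finset.mem_univ ι)] at h1
  have h2 : ‖ι (aeval g R)‖ = |aeval θ R| := by
    have : ι (aeval g R) = ((aeval θ R : ℝ) : ℂ) := by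
      rw [hφ, hι]
      exact aeval_algebraMap_apply ℂ θ R
    rw [this, Complex.norm_real, Real.norm_eq_abs]
  have h3 : ∏ φ ∈ Finset.univ.erase ι, ‖φ (aeval g R)‖ ≤ P := by
    refine Finset.prod_le_prod (fun _ _ => norm_nonneg _) fun φ hm => ?_
    rw [hφ]
    exact norm_aeval_le R M hR _ (hlt φ (Finset.ne_of_mem_erase hm))
  rw [h2] at h1
  rw [inv_le_iff_one_le_mul₀ hPpos]
  exact h1.trans (mul_le_mul_of_nonneg_left h3 (abs_nonneg _))

theorem stmt1 (lam : ℝ) (hlam0 : 0 < lam) (hlam1 : lam < 1)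
    (hPisot : IsPisot lam⁻¹)
    {m : ℕ} (hm : 2 ≤ m) (p : Fin m → ℕ) (hp : ∀ i, 1 ≤ p i)
    (b : Fin m → ℝ) (hbZ : ∀ i, ∃ z : ℤ, b i = (z : ℝ)) :
    ∃ ε : ℝ, 0 < ε ∧ ∀ σ τ : List (Fin m), σ ≠ [] → τ ≠ [] →
      SW lam p b σ = SW lam p b τ ∨
        ε ≤ max |lam ^ ((wordP p σ : ℤ) - (wordP p τ : ℤ)) - 1|
              |lam ^ (-(wordP p τ : ℤ)) * (wordB lam p b σ - wordB lam p b τ)| := by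
  choose z hz using hbZ
  set B : ℤ := ∑ i, |z i| with hBdef
  have hB0 : 0 ≤ B := Finset.sum_nonneg fun _ _ => abs_nonneg _
  have hB : ∀ i, |z i| ≤ B := fun i =>
    Finset.single_le_sum (f := fun i => |z i|) (fun _ _ => abs_nonneg _) (Finset.mem_univ i)
  have hB0' : (0 : ℝ) ≤ B := by exact_mod_cast hB0
  obtain ⟨ε, hε, H⟩ := garsia lam⁻¹ hPisot (2 * B + 1) (by positivity)
  refine ⟨min ε (1 - lam), lt_min hε (by linarith), fun σ τ _ _ => ?_⟩
  by_cases hpe : wordP p σ = wordP p τ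
  · obtain ⟨Q, h1, -, h3⟩ := word_poly lam hlam0 p hp b z hz B hB0 hB σ
    obtain ⟨Q', h1', -, h3'⟩ := word_poly lam hlam0 p hp b z hz B hB0 hB τ
    have hx : lam ^ (-(wordP p τ : ℤ)) * (wordB lam p b σ - wordB lam p b τ)
        = aeval lam⁻¹ (Q - Q') := by
      rw [map_sub, h3, h3', hpe, zpow_neg, zpow_natCast, inv_pow]; ring
    by_cases h0 : aeval lam⁻¹ (Q - Q') = 0
    · left
      rw [h0, mul_eq_zero] at hx
      have hx' := hx.resolve_left (zpow_ne_zero _ hlam0.ne')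
      funext x
      rw [SW_eq, SW_eq, hpe, sub_eq_zero.mp hx']
    · right
      rw [hx]
      refine (min_le_left _ _).trans ((H _ (fun n => ?_) h0).trans (le_max_right _ _))
      have : |(Q - Q').coeff n| ≤ 2 * B + 1 := by
        rw [coeff_sub]
        have := abs_sub_le (Q.coeff n) 0 (Q'.coeff n)
        have := h1 n
        have := h1' n
        simp only [sub_zero, zero_sub, abs_neg] at *
        linarith
      exact_mod_cast this
  · right
    refine (min_le_right _ _).trans (le_trans ?_ (le_max_left _ _))
    rcases lt_or_gt_of_ne hpe with h | h
    · obtain ⟨k, hk⟩ : ∃ k : ℕ, (wordP p σ : ℤ) - wordP p τ = -((k + 1 : ℕ) : ℤ) :=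
        ⟨wordP p τ - wordP p σ - 1, by omega⟩
      rw [hk, zpow_neg, zpow_natCast]
      have hle : lam ^ (k + 1) ≤ lam := pow_le_of_le_one hlam0.le hlam1.le (by omega)
      have h2 : lam⁻¹ ≤ (lam ^ (k + 1))⁻¹ := inv_anti₀ (by positivity) hle
      have h4 : lam * lam⁻¹ = 1 := mul_inv_cancel₀ hlam0.ne'
      refine le_trans ?_ (le_abs_self _)
      nlinarith [sq_nonneg (lam - 1), hPisot.1]
    · obtain ⟨k, hk⟩ : ∃ k : ℕ, (wordP p σ : ℤ) - wordP p τ = ((k + 1 : ℕ) : ℤ) :=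
        ⟨wordP p σ - wordP p τ - 1, by omega⟩
      rw [hk, zpow_natCast]
      have hle : lam ^ (k + 1) ≤ lam := pow_le_of_le_one hlam0.le hlam1.le (by omega)
      refine le_trans ?_ (neg_le_abs _)
      linarith

end PVOSC
end
end

section
/- Let ω = i₁i₂⋯ and ω' = j₁j₂⋯ be infinite words over {1,…,m} with π(ω) = π(ω'). Then for every k ≥ 1 there exist a finite prefix σ_k ≺ ω and a finite prefix τ_k ≺ ω' with p_{σ_k}, p_{τ_k} ∈ ((k−1)T, kT] such that (p_{σ_k} − p_{τ_k}, λ^{−p_{τ_k}}(b_{σ_k} − b_{τ_k})) ∈ Ξ. -/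
open Polynomial Filter

noncomputable section

namespace PVOSC

variable {m : ℕ}

theorem wordP_cons (p : Fin m → ℕ) (i : Fin m) (σ : List (Fin m)) :
    wordP p (i :: σ) = p i + wordP p σ := by
  simp [wordP]

theorem wordP_append (p : Fin m → ℕ) (σ τ : List (Fin m)) :
    wordP p (σ ++ τ) = wordP p σ + wordP p τ := by
  simp [wordP]

theorem wordB_cons (lam : ℝ) (p : Fin m → ℕ) (b : Fin m → ℝ) (i : Fin m) (σ : List (Fin m)) :
    wordB lam p b (i :: σ) = lam ^ p i * wordB lam p b σ + b i := by
  simp [wordB, SW, Smap]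

theorem wordB_append (lam : ℝ) (p : Fin m → ℕ) (b : Fin m → ℝ) (σ τ : List (Fin m)) :
    wordB lam p b (σ ++ τ) = wordB lam p b σ + lam ^ wordP p σ * wordB lam p b τ := by
  induction σ with
  | nil => simp [wordB, SW, wordP]
  | cons i σ ih =>
    rw [List.cons_append, wordB_cons, wordB_cons, wordP_cons, ih, pow_add]
    ring

theorem abs_le_bmax (b : Fin m → ℝ) (i : Fin m) : |b i| ≤ bmax b :=
  le_ciSup (f := fun i => |b i|) (Set.finite_range _).bddAbove i

theorem bmax_nonneg (b : Fin m → ℝ) : 0 ≤ bmax b :=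
  Real.iSup_nonneg fun _ => abs_nonneg _

theorem wordB_abs_le (lam : ℝ) (h0 : 0 < lam) (h1 : lam < 1) (p : Fin m → ℕ)
    (hp : ∀ i, 1 ≤ p i) (b : Fin m → ℝ) (σ : List (Fin m)) :
    |wordB lam p b σ| ≤ bmax b / (1 - lam) := by
  have hM : 0 ≤ bmax b / (1 - lam) := div_nonneg (bmax_nonneg b) (by linarith)
  induction σ with
  | nil => simpa [wordB, SW] using hM
  | cons i σ ih =>
    rw [wordB_cons]
    have hl : lam ^ p i ≤ lam := by
      simpa using pow_le_pow_of_le_one h0.le h1.le (hp i)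
    have h2 : |lam ^ p i * wordB lam p b σ| ≤ lam * (bmax b / (1 - lam)) := by
      rw [abs_mul, abs_of_pos (pow_pos h0 _)]
      exact mul_le_mul hl ih (abs_nonneg _) h0.le
    have h3 : lam * (bmax b / (1 - lam)) + bmax b = bmax b / (1 - lam) := by
      have : (1 - lam) ≠ 0 := by linarith
      field_simp
      ring
    calc _ ≤ _ := abs_add_le _ _
      _ ≤ _ := add_le_add h2 (abs_le_bmax b i)
      _ = _ := h3

theorem prefixList_add (ω : ℕ → Fin m) (n d : ℕ) :
    prefixList ω (n + d) = prefixList ω n ++ prefixList (fun j => ω (n + j)) d := by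
  simp [prefixList, List.range_add, Function.comp_def]

theorem prefixList_succ (ω : ℕ → Fin m) (n : ℕ) :
    prefixList ω (n + 1) = prefixList ω n ++ [ω n] := by
  simp [prefixList, List.range_succ]

theorem tail_bound (lam : ℝ) (h0 : 0 < lam) (h1 : lam < 1) (p : Fin m → ℕ)
    (hp : ∀ i, 1 ≤ p i) (b : Fin m → ℝ) (ω : ℕ → Fin m) (x : ℝ)
    (hx : Tendsto (fun k => SW lam p b (prefixList ω k) 0) atTop (nhds x)) (n : ℕ) :
    |x - wordB lam p b (prefixList ω n)| ≤
      lam ^ wordP p (prefixList ω n) * (bmax b / (1 - lam)) := by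
  have h := (hx.sub_const (wordB lam p b (prefixList ω n))).abs
  refine le_of_tendsto h ?_
  filter_upwards [eventually_ge_atTop n] with N hN
  obtain ⟨d, rfl⟩ := Nat.exists_eq_add_of_le hN
  change |wordB lam p b (prefixList ω (n + d)) - _| ≤ _
  rw [prefixList_add, wordB_append, add_sub_cancel_left, abs_mul, abs_of_pos (pow_pos h0 _)]
  exact mul_le_mul_of_nonneg_left (wordB_abs_le lam h0 h1 p hp b _) (pow_pos h0 _).le

theorem exists_prefix (p : Fin m → ℕ) (hp : ∀ i, 1 ≤ p i) (T : ℕ) (hT : ∀ i, p i ≤ T)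
    (ω : ℕ → Fin m) (a : ℕ) :
    ∃ n, a < wordP p (prefixList ω n) ∧ wordP p (prefixList ω n) ≤ a + T := by
  have hs : ∀ n, wordP p (prefixList ω (n + 1)) = wordP p (prefixList ω n) + p (ω n) := by
    intro n
    rw [prefixList_succ, wordP_append]
    simp [wordP]
  have hge : ∀ n, n ≤ wordP p (prefixList ω n) := by
    intro n
    induction n with
    | zero => simp
    | succ n ih =>
      have := hp (ω n)
      rw [hs]
      omega
  have hex : ∃ n, a < wordP p (prefixList ω n) := ⟨a + 1, hge (a + 1)⟩
  classical
  refine ⟨Nat.find hex, Nat.find_spec hex, ?_⟩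
  rcases hn : Nat.find hex with _ | n
  · simp [prefixList, wordP]
  · have := Nat.find_min hex (m := n) (by omega)
    have := hT (ω n)
    rw [hs]
    omega

theorem exists_poly (lam : ℝ) (h0 : 0 < lam) (p : Fin m → ℕ)
    (hp : ∀ i, 1 ≤ p i) (b : Fin m → ℝ) (σ : List (Fin m)) :
    ∀ e : ℕ, wordP p σ ≤ e → ∃ Q : ℝ[X], (∀ n, e ≤ n → Q.coeff n = 0) ∧
      (∀ n, Q.coeff n ∈ Bset b) ∧ lam * wordB lam p b σ = lam ^ e * Q.eval lam⁻¹ := by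
  induction σ with
  | nil =>
    intro e _
    exact ⟨0, by simp, by simp [Bset], by simp [wordB, SW]⟩
  | cons i σ ih =>
    intro e he
    rw [wordP_cons] at he
    have hpi := hp i
    obtain ⟨d, rfl⟩ := Nat.exists_eq_add_of_le (show p i ≤ e by omega)
    obtain ⟨Q, hd, hB, hQ⟩ := ih d (by omega)
    obtain ⟨q, hq⟩ := Nat.exists_eq_add_of_le hpi
    refine ⟨C (b i) * X ^ (q + d) + Q, ?_, ?_, ?_⟩
    · intro n hn
      rw [coeff_add, coeff_C_mul_X_pow, hd n (by omega), if_neg (by omega), add_zero]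
    · intro n
      rw [coeff_add, coeff_C_mul_X_pow]
      split_ifs with h
      · rw [hd n (by omega), add_zero]
        exact Set.mem_insert_of_mem _ ⟨i, rfl⟩
      · rw [zero_add]
        exact hB n
    · rw [wordB_cons, mul_add, mul_left_comm, hQ, eval_add, eval_mul, eval_C, eval_pow, eval_X,
        hq]
      have hne : lam ^ (q + d) ≠ 0 := pow_ne_zero _ h0.ne'
      have h2 : lam ^ (1 + q + d) = lam * lam ^ (q + d) := by ring
      rw [mul_add, h2, inv_pow]
      have h3 : lam * lam ^ (q + d) * (b i * (lam ^ (q + d))⁻¹) = lam * b i := by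
        field_simp
      rw [h3]
      ring

theorem stmt6 (lam : ℝ) (hlam0 : 0 < lam) (hlam1 : lam < 1)
    (hPisot : IsPisot lam⁻¹)
    {m : ℕ} (hm : 2 ≤ m) (p : Fin m → ℕ) (hp : ∀ i, 1 ≤ p i)
    (b : Fin m → ℝ) (hbZ : ∀ i, ∃ z : ℤ, b i = (z : ℝ))
    (T : ℕ) (hT : T = Finset.univ.sup p)
    (ω ω' : ℕ → Fin m)
    (hpi : ∃ x : ℝ,
      Tendsto (fun k => SW lam p b (prefixList ω k) 0) atTop (nhds x) ∧
      Tendsto (fun k => SW lam p b (prefixList ω' k) 0) atTop (nhds x)) :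
    ∀ k : ℕ, 1 ≤ k →
      ∃ σ τ : List (Fin m), (∃ n, σ = prefixList ω n) ∧ (∃ n, τ = prefixList ω' n) ∧
        (k - 1) * T < wordP p σ ∧ wordP p σ ≤ k * T ∧
        (k - 1) * T < wordP p τ ∧ wordP p τ ≤ k * T ∧
        ((wordP p σ : ℤ) - (wordP p τ : ℤ),
          lam ^ (-(wordP p τ : ℤ)) * (wordB lam p b σ - wordB lam p b τ)) ∈ Xi lam b T := by
  intro k hk
  obtain ⟨x, hx, hx'⟩ := hpi
  have hpT : ∀ i, p i ≤ T := fun i => hT ▸ Finset.le_sup (Finset.mem_univ i)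
  obtain ⟨n, hn1, hn2⟩ := exists_prefix p hp T hpT ω ((k - 1) * T)
  obtain ⟨n', hn1', hn2'⟩ := exists_prefix p hp T hpT ω' ((k - 1) * T)
  have hkT : (k - 1) * T + T = k * T := by
    obtain ⟨j, rfl⟩ := Nat.exists_eq_add_of_le hk
    simp only [Nat.add_sub_cancel_left]
    ring
  have hb1 := tail_bound lam hlam0 hlam1 p hp b ω x hx n
  have hb2 := tail_bound lam hlam0 hlam1 p hp b ω' x hx' n'
  refine ⟨prefixList ω n, prefixList ω' n', ⟨n, rfl⟩, ⟨n', rfl⟩, hn1, hkT ▸ hn2, hn1',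
    hkT ▸ hn2', ?_⟩
  generalize prefixList ω n = σ at *
  generalize prefixList ω' n' = τ at *
  have hM : 0 ≤ bmax b / (1 - lam) := div_nonneg (bmax_nonneg b) (by linarith)
  refine ⟨?_, ?_, ?_⟩
  · simp only
    rw [abs_le]
    constructor <;> omega
  · simp only
    have hz : 0 < lam ^ (-(wordP p τ : ℤ)) := zpow_pos hlam0 _
    rw [abs_mul, abs_of_pos hz]
    have h1 : |wordB lam p b σ - wordB lam p b τ| ≤
        lam ^ wordP p σ * (bmax b / (1 - lam)) + lam ^ wordP p τ * (bmax b / (1 - lam)) := by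
      have := abs_sub_le (wordB lam p b σ) x (wordB lam p b τ)
      rw [abs_sub_comm _ x] at this
      linarith
    have h2 : lam ^ (-(wordP p τ : ℤ)) * lam ^ wordP p τ = 1 := by
      rw [← zpow_natCast, ← zpow_add₀ hlam0.ne']
      simp
    have h3 : lam ^ (-(wordP p τ : ℤ)) * lam ^ wordP p σ ≤ lam ^ (1 - (T : ℤ)) := by
      rw [← zpow_natCast, ← zpow_add₀ hlam0.ne']
      exact zpow_le_zpow_right_of_le_one₀ hlam0 hlam1.le (by omega)
    calc _ ≤ _ := mul_le_mul_of_nonneg_left h1 hz.le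
      _ = (lam ^ (-(wordP p τ : ℤ)) * lam ^ wordP p τ
            + lam ^ (-(wordP p τ : ℤ)) * lam ^ wordP p σ) * (bmax b / (1 - lam)) := by ring
      _ ≤ (1 + lam ^ (1 - (T : ℤ))) * (bmax b / (1 - lam)) := by
        rw [h2]
        exact mul_le_mul_of_nonneg_right (by linarith) hM
      _ = _ := by ring
  · simp only
    have hT1 : 1 ≤ T := (hp (ω 0)).trans (hpT _)
    obtain ⟨Q, -, hQB, hQ⟩ := exists_poly lam hlam0 p hp b σ (T + wordP p τ - 1) (by omega)
    obtain ⟨Q', -, hQB', hQ'⟩ := exists_poly lam hlam0 p hp b τ (T + wordP p τ - 1) (by omega)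
    refine ⟨Q - Q', fun j => ⟨_, hQB j, _, hQB' j, coeff_sub _ _ _⟩, ?_⟩
    have he : lam ^ (2 - (T : ℤ)) * lam ^ (-(wordP p τ : ℤ)) =
        (lam ^ (T + wordP p τ - 1))⁻¹ * lam := by
      rw [← zpow_natCast, ← zpow_neg, ← zpow_add₀ hlam0.ne', ← zpow_add_one₀ hlam0.ne']
      congr 1
      omega
    rw [← mul_assoc, he, mul_assoc, mul_sub, hQ, hQ', ← mul_sub,
      inv_mul_cancel_left₀ (pow_ne_zero _ hlam0.ne'), eval_sub]

end PVOSC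
end
end

section
/- Let ω = i₁i₂⋯ and ω' = j₁j₂⋯ be infinite words over {1,…,m}. Suppose that for every k ≥ 1 there exist finite prefixes σ_k ≺ ω and τ_k ≺ ω' with p_{σ_k}, p_{τ_k} ∈ ((k−1)T, kT] and |λ^{−p_{τ_k}}(b_{σ_k} − b_{τ_k})| ≤ (1+λ^{1−T})·max_i|b_i|/(1−λ). Then π(ω) = π(ω'). -/
open Polynomial Filter

noncomputable section

namespace PVOSC

variable {m : ℕ}

theorem SW_affine (lam : ℝ) (p : Fin m → ℕ) (b : Fin m → ℝ) (σ : List (Fin m)) (x : ℝ) :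
    SW lam p b σ x = lam ^ wordP p σ * x + SW lam p b σ 0 := by
  induction σ with
  | nil => simp [SW, wordP]
  | cons i σ ih =>
    have e : ∀ y, SW lam p b (i :: σ) y = lam ^ p i * SW lam p b σ y + b i := fun y => rfl
    have e2 : wordP p (i :: σ) = p i + wordP p σ := by simp [wordP]
    rw [e, e, ih, e2, pow_add]
    ring

theorem SW_snoc (lam : ℝ) (p : Fin m → ℕ) (b : Fin m → ℝ) (ω : ℕ → Fin m) (n : ℕ) :
    SW lam p b (prefixList ω (n + 1)) 0 =
      lam ^ wordP p (prefixList ω n) * b (ω n) + SW lam p b (prefixList ω n) 0 := by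
  rw [← SW_affine]
  have e : prefixList ω (n + 1) = prefixList ω n ++ [ω n] := by
    simp [prefixList, List.range_succ]
  rw [e]
  generalize prefixList ω n = σ
  induction σ with
  | nil => simp [SW, Smap]
  | cons i σ ih =>
    have e : ∀ τ y, SW lam p b (i :: τ) y = lam ^ p i * SW lam p b τ y + b i :=
      fun τ y => rfl
    rw [List.cons_append, e, e, ih]

theorem wordP_snoc (p : Fin m → ℕ) (ω : ℕ → Fin m) (n : ℕ) :
    wordP p (prefixList ω (n + 1)) = wordP p (prefixList ω n) + p (ω n) := by
  simp [wordP, prefixList, List.range_succ]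

theorem le_wordP (p : Fin m → ℕ) (hp : ∀ i, 1 ≤ p i) (ω : ℕ → Fin m) (n : ℕ) :
    n ≤ wordP p (prefixList ω n) := by
  induction n with
  | zero => simp
  | succ n ih =>
    rw [wordP_snoc]
    have := hp (ω n)
    omega

theorem wordP_le (p : Fin m → ℕ) (T : ℕ) (hp : ∀ i, p i ≤ T) (ω : ℕ → Fin m) (n : ℕ) :
    wordP p (prefixList ω n) ≤ n * T := by
  induction n with
  | zero => simp [wordP, prefixList]
  | succ n ih =>
    rw [wordP_snoc, Nat.succ_mul]
    have := hp (ω n)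
    omega

theorem exists_lim (lam : ℝ) (hlam0 : 0 < lam) (hlam1 : lam < 1) (p : Fin m → ℕ)
    (hp : ∀ i, 1 ≤ p i) (b : Fin m → ℝ) (ω : ℕ → Fin m) :
    ∃ x : ℝ, Tendsto (fun k => SW lam p b (prefixList ω k) 0) atTop (nhds x) := by
  apply cauchySeq_tendsto_of_complete
  apply cauchySeq_of_le_geometric lam (∑ i, |b i|) hlam1
  intro n
  rw [SW_snoc, dist_comm, Real.dist_eq, add_sub_cancel_right, abs_mul,
    abs_of_pos (pow_pos hlam0 _), mul_comm]
  apply mul_le_mul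
  · exact Finset.single_le_sum (f := fun i => |b i|) (fun i _ => abs_nonneg _)
      (Finset.mem_univ (ω n))
  · exact pow_le_pow_of_le_one hlam0.le hlam1.le (le_wordP p hp ω n)
  · positivity
  · positivity

theorem stmt7 (lam : ℝ) (hlam0 : 0 < lam) (hlam1 : lam < 1)
    (hPisot : IsPisot lam⁻¹)
    {m : ℕ} (hm : 2 ≤ m) (p : Fin m → ℕ) (hp : ∀ i, 1 ≤ p i)
    (b : Fin m → ℝ) (hbZ : ∀ i, ∃ z : ℤ, b i = (z : ℝ))
    (T : ℕ) (hT : T = Finset.univ.sup p)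
    (ω ω' : ℕ → Fin m)
    (h : ∀ k : ℕ, 1 ≤ k →
      ∃ σ τ : List (Fin m), (∃ n, σ = prefixList ω n) ∧ (∃ n, τ = prefixList ω' n) ∧
        (k - 1) * T < wordP p σ ∧ wordP p σ ≤ k * T ∧
        (k - 1) * T < wordP p τ ∧ wordP p τ ≤ k * T ∧
        |lam ^ (-(wordP p τ : ℤ)) * (wordB lam p b σ - wordB lam p b τ)| ≤
          (1 + lam ^ (1 - (T : ℤ))) * bmax b / (1 - lam)) :
    ∃ x : ℝ,
      Tendsto (fun k => SW lam p b (prefixList ω k) 0) atTop (nhds x) ∧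
      Tendsto (fun k => SW lam p b (prefixList ω' k) 0) atTop (nhds x) := by
  have hpT : ∀ i, p i ≤ T := fun i => hT ▸ Finset.le_sup (Finset.mem_univ i)
  obtain ⟨x, hx⟩ := exists_lim lam hlam0 hlam1 p hp b ω
  obtain ⟨y, hy⟩ := exists_lim lam hlam0 hlam1 p hp b ω'
  have key : ∀ k : ℕ, ∃ n n' : ℕ, k ≤ n ∧ k ≤ n' ∧
      |SW lam p b (prefixList ω n) 0 - SW lam p b (prefixList ω' n') 0| ≤
        lam ^ k * ((1 + lam ^ (1 - (T : ℤ))) * bmax b / (1 - lam)) := by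
    intro k
    obtain ⟨σ, τ, ⟨n, rfl⟩, ⟨n', rfl⟩, h1, -, h3, -, h5⟩ := h (k + 1) (by omega)
    rw [Nat.add_sub_cancel] at h1 h3
    have hn := Nat.lt_of_mul_lt_mul_right (h1.trans_le (wordP_le p T hpT ω n))
    have hn' := Nat.lt_of_mul_lt_mul_right (h3.trans_le (wordP_le p T hpT ω' n'))
    refine ⟨n, n', hn.le, hn'.le, ?_⟩
    have hk : k ≤ wordP p (prefixList ω' n') := hn'.le.trans (le_wordP p hp ω' n')
    set w := wordP p (prefixList ω' n')
    set C := (1 + lam ^ (1 - (T : ℤ))) * bmax b / (1 - lam)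
    have hC : 0 ≤ C := (abs_nonneg _).trans h5
    have hw : 0 < lam ^ w := pow_pos hlam0 _
    rw [abs_mul, zpow_neg, zpow_natCast, abs_of_pos (inv_pos.2 hw), inv_mul_le_iff₀ hw] at h5
    exact h5.trans (mul_le_mul_of_nonneg_right
      (pow_le_pow_of_le_one hlam0.le hlam1.le hk) hC)
  choose n n' hn hn' hd using key
  have tx := hx.comp (tendsto_atTop_mono hn tendsto_id)
  have ty := hy.comp (tendsto_atTop_mono hn' tendsto_id)
  have t0 := (tendsto_pow_atTop_nhds_zero_of_lt_one hlam0.le hlam1).mul_const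
    ((1 + lam ^ (1 - (T : ℤ))) * bmax b / (1 - lam))
  rw [zero_mul] at t0
  have hxy : |x - y| ≤ 0 := le_of_tendsto_of_tendsto' (tx.sub ty).abs t0 hd
  have : x = y := sub_eq_zero.1 (abs_nonpos_iff.1 hxy)
  exact ⟨x, hx, this ▸ hy⟩

end PVOSC
end
end
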